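/- Let A be a commutative Noetherian local ring with maximal ideal m and residue field k, and M a nonzero finitely generated A-module. Then depth M (the maximal length of an M-regular sequence contained in m) equals the least integer n such that Ext^n_A(k, M) ≠ 0. -/

import Mathlib

open CategoryTheory

/-- The `n`-th Ext group of `M` and `N` over `R`. -/
noncomputable def extModule (R : Type) [CommRing R] (M N : ModuleCat R) (n : ℕ) :
    ModuleCat R :=
  ((Ext R (ModuleCat R) n).obj (Opposite.op M)).obj N

/-- The depth of a module over a local ring: the supremum of lengths of
`M`-regular sequences contained in the maximal ideal. -/
noncomputable def depth (R : Type) [CommRing R] [IsLocalRing R]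
    (M : Type) [AddCommGroup M] [Module R M] : ℕ∞ :=
  sSup {n : ℕ∞ | ∃ rs : List R, (rs.length : ℕ∞) = n ∧
    (∀ x ∈ rs, x ∈ IsLocalRing.maximalIdeal R) ∧ RingTheory.Sequence.IsRegular M rs}

/-!
By Rees' theorem an `M`-regular sequence of length `n` in `I` exists exactly when `Ext^i(N, M) = 0`
for all `i < n`, whenever `IM ≠ M` and `N` is finitely generated with support `V(I)`. What remains
is that `Ext` does not vanish in every degree, i.e. that the lengths of `M`-regular sequences in `I`
are bounded: localizing at a prime `p ⊇ I` in the support of `M` keeps them regular, and over the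
local ring `R_p` their length is at most `dim M_p`, hence at most the height of `p`.
-/

universe w v u

section ExtComparison

variable {R : Type*} [Ring R] {C : Type u} [Category.{v} C] [Abelian C] [Linear R C]

theorem preservesFiniteLimits_linearYoneda_obj (Y : C) :
    Limits.PreservesFiniteLimits ((linearYoneda R C).obj Y) := by
  have : Limits.PreservesFiniteLimits ((linearYoneda R C).obj Y ⋙ forget (ModuleCat.{v} R)) :=
    inferInstanceAs (Limits.PreservesFiniteLimits (yoneda.obj Y))
  exact Limits.preservesFiniteLimits_of_reflects_of_preserves _ (forget (ModuleCat.{v} R))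

theorem subsingleton_abelianExt_succ_iff [HasExt.{w} C] {X : C} (P : ProjectiveResolution X)
    (Y : C) (n : ℕ) :
    Subsingleton (Abelian.Ext.{w} X Y (n + 1)) ↔
      ∀ f : P.complex.X (n + 1) ⟶ Y, P.complex.d (n + 2) (n + 1) ≫ f = 0 →
        ∃ g : P.complex.X n ⟶ Y, P.complex.d (n + 1) n ≫ g = f := by
  refine ⟨fun _ f hf => (P.extMk_eq_zero_iff f _ rfl hf n rfl).1 (Subsingleton.elim _ _),
    fun h => subsingleton_of_forall_eq 0 fun e => ?_⟩
  obtain ⟨f, hf, rfl⟩ := P.extMk_surjective e (n + 2) rfl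
  exact (P.extMk_eq_zero_iff f _ rfl hf n rfl).2 (h f hf)

variable [EnoughProjectives C]

/-- The identification of the zeroth derived functor of `Hom(-, Y)`, evaluated at `X`, with
`Hom(X, Y)`, used to compare the derived-functor `Ext` with `Abelian.Ext` in degree `0`. -/
noncomputable def extZeroIsoHom (X Y : C) :
    ((Ext R C 0).obj (.op X)).obj Y ≅ ModuleCat.of R (X ⟶ Y) :=
  have := preservesFiniteLimits_linearYoneda_obj (R := R) Y
  have := Limits.preservesFiniteColimits_rightOp ((linearYoneda R C).obj Y)
  (((linearYoneda R C).obj Y).rightOp.leftDerivedZeroIsoSelf.app X).unop.symm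

theorem subsingleton_ext_succ_iff {X : C} (P : ProjectiveResolution X) (Y : C) (n : ℕ) :
    Subsingleton (((Ext R C (n + 1)).obj (.op X)).obj Y) ↔
      ∀ f : P.complex.X (n + 1) ⟶ Y, P.complex.d (n + 2) (n + 1) ≫ f = 0 →
        ∃ g : P.complex.X n ⟶ Y, P.complex.d (n + 1) n ≫ g = f := by
  rw [← ModuleCat.isZero_iff_subsingleton, (P.isoExt (R := R) (n + 1) Y).isZero_iff,
    ← HomologicalComplex.exactAt_iff_isZero_homology,
    HomologicalComplex.exactAt_iff' _ n (n + 1) (n + 2) (by simp) (by simp),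
    ShortComplex.moduleCat_exact_iff]
  rfl

theorem subsingleton_ext_iff_subsingleton_abelianExt [HasExt.{w} C] (X Y : C) (n : ℕ) :
    Subsingleton (((Ext R C n).obj (.op X)).obj Y) ↔ Subsingleton (Abelian.Ext.{w} X Y n) := by
  cases n with
  | zero =>
    exact (extZeroIsoHom X Y).toLinearEquiv.toEquiv.subsingleton_congr.trans
      Abelian.Ext.addEquiv₀.subsingleton_congr.symm
  | succ n =>
    let P := ProjectiveResolution.of X
    rw [subsingleton_ext_succ_iff P, subsingleton_abelianExt_succ_iff P]

end ExtComparison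

section RegularSequenceLength

open RingTheory.Sequence

variable {R : Type*} [CommRing R] {M : Type*} [AddCommGroup M] [Module R M] [Module.Finite R M]

theorem exists_mem_support_le_of_smul_top_ne_top {I : Ideal R}
    (hI : I • (⊤ : Submodule R M) ≠ ⊤) : ∃ p ∈ Module.support R M, I ≤ p.asIdeal := by
  have : Nontrivial (M ⧸ I • (⊤ : Submodule R M)) := Submodule.Quotient.nontrivial_iff.2 hI
  obtain ⟨p, hp⟩ := Module.nonempty_support_of_nontrivial (R := R)
    (M := M ⧸ I • (⊤ : Submodule R M))
  rw [Module.support_quotient] at hp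
  exact ⟨p, hp⟩

variable [IsNoetherianRing R]

theorem length_le_supportDim_of_isRegular [IsLocalRing R] {rs : List R} (hrs : IsRegular M rs) :
    (rs.length : WithBot ℕ∞) ≤ Module.supportDim R M := by
  have : Nontrivial (M ⧸ Ideal.ofList rs • (⊤ : Submodule R M)) :=
    Submodule.Quotient.nontrivial_iff.2 hrs.top_ne_smul.symm
  rw [← Module.supportDim_add_length_eq_supportDim_of_isRegular rs hrs]
  refine le_add_of_nonneg_left (Order.krullDim_nonneg_iff.2 ?_)
  exact Module.nonempty_support_of_nontrivial.to_subtype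

theorem length_le_height_of_isWeaklyRegular {p : PrimeSpectrum R} (hp : p ∈ Module.support R M)
    {rs : List R} (hrs : IsWeaklyRegular M rs) (hmem : ∀ r ∈ rs, r ∈ p.asIdeal) :
    (rs.length : ℕ∞) ≤ p.asIdeal.height := by
  let Rp := Localization.AtPrime p.asIdeal
  let Mp := LocalizedModule.AtPrime p.asIdeal M
  have : Nontrivial Mp := hp
  have hreg : IsRegular Mp (rs.map (algebraMap R Rp)) :=
    hrs.isRegular_of_isLocalizedModule_of_mem Rp p.asIdeal
      (LocalizedModule.mkLinearMap p.asIdeal.primeCompl M) hmem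
  have hlen := (length_le_supportDim_of_isRegular hreg).trans
    (Module.supportDim_le_ringKrullDim Rp Mp)
  rw [IsLocalization.AtPrime.ringKrullDim_eq_height p.asIdeal Rp, List.length_map] at hlen
  exact_mod_cast hlen

end RegularSequenceLength

section IdealDepth

open RingTheory.Sequence

/-- The `I`-depth (or grade of `I` on `M`): the supremum of the lengths of the `M`-regular
sequences contained in `I`. It is phrased so that `depth R M` unfolds to the depth along the
maximal ideal. -/
noncomputable def idealDepth {R : Type*} [CommRing R] (I : Ideal R) (M : Type*) [AddCommGroup M]
    [Module R M] : ℕ∞ :=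
  sSup {n : ℕ∞ | ∃ rs : List R, (rs.length : ℕ∞) = n ∧ (∀ x ∈ rs, x ∈ I) ∧ IsRegular M rs}

theorem idealDepth_lt_top {R : Type*} [CommRing R] [IsNoetherianRing R] {I : Ideal R}
    {M : Type*} [AddCommGroup M] [Module R M] [Module.Finite R M]
    (hI : I • (⊤ : Submodule R M) ≠ ⊤) : idealDepth I M < ⊤ := by
  obtain ⟨p, hp, hIp⟩ := exists_mem_support_le_of_smul_top_ne_top hI
  refine lt_of_le_of_lt (sSup_le ?_) (Ideal.height_lt_top p.isPrime.ne_top)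
  rintro _ ⟨rs, rfl, hmem, hrs⟩
  exact length_le_height_of_isWeaklyRegular hp hrs.toIsWeaklyRegular fun r hr => hIp (hmem r hr)

variable {R : Type u} [CommRing R] [IsNoetherianRing R] [Small.{v} R] {I : Ideal R}
  {M N : ModuleCat.{v} R} [Module.Finite R M] [Module.Finite R N]

theorem subsingleton_abelianExt_of_lt_idealDepth (hI : I • (⊤ : Submodule R M) ≠ ⊤)
    (hN : Module.support R N ⊆ PrimeSpectrum.zeroLocus I) {i : ℕ}
    (hi : (i : ℕ∞) < idealDepth I M) : Subsingleton (Abelian.Ext N M i) := by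
  obtain ⟨_, ⟨rs, rfl, hmem, hrs⟩, hlt⟩ := lt_sSup_iff.1 hi
  exact ModuleCat.subsingleton_ext_of_exists_isRegular I N hN M hI.lt_top rs hmem hrs i
    (by exact_mod_cast hlt)

theorem le_idealDepth_of_subsingleton_abelianExt (hI : I • (⊤ : Submodule R M) ≠ ⊤)
    (hN : Module.support R N = PrimeSpectrum.zeroLocus I) {n : ℕ}
    (hExt : ∀ i < n, Subsingleton (Abelian.Ext N M i)) : (n : ℕ∞) ≤ idealDepth I M := by
  obtain ⟨rs, hlen, hmem, hrs⟩ :=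
    ModuleCat.exists_isRegular_of_exists_subsingleton_ext I n M hI.lt_top N hN hExt
  exact le_sSup ⟨rs, congrArg _ hlen, hmem, hrs⟩

theorem exists_idealDepth_eq_isLeast_nontrivial_abelianExt (hI : I • (⊤ : Submodule R M) ≠ ⊤)
    (hN : Module.support R N = PrimeSpectrum.zeroLocus I) :
    ∃ d : ℕ, idealDepth I M = d ∧ IsLeast {n : ℕ | Nontrivial (Abelian.Ext N M n)} d := by
  obtain ⟨d, hd⟩ := ENat.ne_top_iff_exists.1 (idealDepth_lt_top hI).ne
  have hbelow : ∀ i < d, Subsingleton (Abelian.Ext N M i) := fun i hi =>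
    subsingleton_abelianExt_of_lt_idealDepth hI hN.subset (hd ▸ Nat.cast_lt.2 hi)
  refine ⟨d, hd.symm, ?_, fun n hn => ?_⟩
  · by_contra hvanish
    have hle : ∀ i < d + 1, Subsingleton (Abelian.Ext N M i) := fun i hi =>
      (Nat.lt_succ_iff_lt_or_eq.1 hi).elim (hbelow i)
        fun h => h ▸ not_nontrivial_iff_subsingleton.1 hvanish
    have : ((d + 1 : ℕ) : ℕ∞) ≤ d := hd ▸ le_idealDepth_of_subsingleton_abelianExt hI hN hle
    exact d.not_succ_le_self (Nat.cast_le.1 this)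
  · by_contra! hlt
    exact not_nontrivial_iff_subsingleton.2 (hbelow n hlt) hn

theorem stmt5_general (I : Ideal R) (M N : ModuleCat.{v} R) [Module.Finite R M]
    [Module.Finite R N] (hI : I • (⊤ : Submodule R M) ≠ ⊤)
    (hN : Module.support R N = PrimeSpectrum.zeroLocus I) :
    ∃ d : ℕ, idealDepth I M = d ∧
      IsLeast {n : ℕ | Nontrivial (((Ext R (ModuleCat.{v} R) n).obj (.op N)).obj M)} d := by
  simpa only [← not_subsingleton_iff_nontrivial, subsingleton_ext_iff_subsingleton_abelianExt]
    using exists_idealDepth_eq_isLeast_nontrivial_abelianExt hI hN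

end IdealDepth

section LocalRing

variable (R : Type*) [CommRing R] [IsLocalRing R]

theorem support_residueField : Module.support R (IsLocalRing.ResidueField R) =
    PrimeSpectrum.zeroLocus (IsLocalRing.maximalIdeal R) := by
  change Module.support R (R ⧸ IsLocalRing.maximalIdeal R) = _
  rw [Module.support_eq_zeroLocus, Ideal.annihilator_quotient]

theorem maximalIdeal_smul_top_ne_top (M : Type*) [AddCommGroup M] [Module R M] [Module.Finite R M]
    [Nontrivial M] : IsLocalRing.maximalIdeal R • (⊤ : Submodule R M) ≠ ⊤ :=
  (Submodule.top_ne_ideal_smul_of_le_jacobson_annihilator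
    (IsLocalRing.maximalIdeal_le_jacobson _)).symm

end LocalRing

/-- Rees' characterization of depth: for a nonzero finitely generated module `M`
over a commutative Noetherian local ring with residue field `k`,
`depth M = inf { n | Ext^n(k, M) ≠ 0 }`. -/
theorem stmt5 (R : Type) [CommRing R] [IsNoetherianRing R] [IsLocalRing R]
    (M : Type) [AddCommGroup M] [Module R M] [Module.Finite R M] [Nontrivial M] :
    depth R M =
      (sInf {n : ℕ | Nontrivial (extModule R
        (ModuleCat.of R (IsLocalRing.ResidueField R)) (ModuleCat.of R M) n)} : ℕ) := by
  obtain ⟨d, hd, hleast⟩ := stmt5_general (IsLocalRing.maximalIdeal R) (ModuleCat.of R M)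
    (ModuleCat.of R (IsLocalRing.ResidueField R)) (maximalIdeal_smul_top_ne_top R M)
    (support_residueField R)
  exact hd.trans (congrArg _ hleast.csInf_eq.symm)
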